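/- Let n ≥ 2, L ≥ 2, ν ∈ {0,1}, and let -1 < β_L < … < β₁ < 1 be such that Π_L(t) := ∏_{i=1}^{L}(t-β_i) is orthogonal to all polynomials of degree ≤ L-2 with respect to the weight v_{1,ν}(t). Then the polynomials (1+t)^ν, (1+t)^ν ∏_{i=k}^{L}(t-β_i) for 2 ≤ k ≤ L, and (1+t)^ν ∏_{i=2}^{L}(t-β_i) ∏_{i=k}^{L}(t-β_i) for 2 ≤ k ≤ L, all have non-negative coefficients in their expansions in the polynomials P_i := P_i^{0,0}. -/

import Mathlib

/-!
Write `v_{a,b}` for the weights and `β 1 > ⋯ > β L` for the zeros of `Π_L`.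

* Gauss quadrature replaces `v_{1,b}`, in degree `≤ 2L - 2`, by a discrete measure `μ` with positive
  masses at the `β i`. The measure `(β 1 - t) dμ` forgets the largest node, and an induction on the
  number of nodes shows that `∏_{i ≥ k} (t - β i)`, `k ≥ 2`, has non-negative coefficients in the
  orthogonal polynomials of `v_{1,b}` (`prod_nonneg_of_orth`). The induction step is the Christoffel
  formula: orthogonal polynomials for `(r - t) Λ`, with `r` to the right of the support, are
  positive multiples of reproducing kernels at `r`, hence have non-negative coefficients in the
  orthogonal polynomials for `Λ` (`OrthFam.christoffel`). With `r = 1` the same formula passes from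
  `v_{1,b}` to `v_{0,b}`.

* Under `x ^ 2 = (1 + t) / 2`, the orthogonal polynomials of `v_{0,0}` and of `v_{0,1}` are the even
  Gegenbauer polynomials `p_{2k}(x)` and the quotients `p_{2k+1}(x) / x`, for the parameter
  `(n - 2) / 2` (`famE_orth`, `famO_orth`). This is checked by computing all moments from the Beta
  integral recurrence (`fam_moments`, `wInt_moment`).

* Products `p_i p_j` are non-negative combinations of the `p_l` (`famProd_nonneg`): the
  coefficients solve a discrete wave equation in `(i, j)`, and since the recurrence coefficients
  increase and are at most `1 / 2`, summing the equation over a backward triangle expresses each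
  value through earlier ones with non-negative weights (`triangle_sum`, `wave_nonneg`).

So `(1 + t)^b f g` is a non-negative combination of the `P_l` whenever `f` and `g` are non-negative
combinations of the orthogonal polynomials of `v_{0,b}` (`coneb_mul`), and every polynomial in
question has this form, with `f` and `g` equal to `1` or to a partial product.
-/
open MeasureTheory Polynomial

noncomputable section

/-- The weight `v_{a,b}(t) = (1+t)^{b-1/2} (1-t)^{a+(n-3)/2}`. -/
def vw (n a b : ℕ) (t : ℝ) : ℝ :=
  (1 + t) ^ ((b : ℝ) - 1 / 2) * (1 - t) ^ ((a : ℝ) + ((n : ℝ) - 3) / 2)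

/-- `P` is the family of monic orthogonal polynomials with respect to `v_{a,b}` on `[-1,1]`,
with `deg P_k = k`. -/
def IsMonicOrth (n a b : ℕ) (P : ℕ → Polynomial ℝ) : Prop :=
  ∀ k, (P k).Monic ∧ (P k).natDegree = k ∧
    ∀ q : Polynomial ℝ, q.natDegree < k →
      ∫ t in Set.Ioo (-1 : ℝ) 1, (P k).eval t * q.eval t * vw n a b t = 0

/-! ### Orthogonal families of a linear functional -/

/-- `P 0, …, P N` are orthogonal polynomials, with positive leading coefficients, for the
functional `Λ`, which is positive definite on polynomials of degree `≤ N`. The degree of `P k` is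
exactly `k`, since its coefficient of index `k` is positive. -/
structure OrthFam (Λ : ℝ[X] →ₗ[ℝ] ℝ) (N : ℕ) (P : ℕ → ℝ[X]) : Prop where
  pd : ∀ q : ℝ[X], q ≠ 0 → q.natDegree ≤ N → 0 < Λ (q * q)
  deg : ∀ k ≤ N, (P k).natDegree ≤ k
  lc : ∀ k ≤ N, 0 < (P k).coeff k
  orth : ∀ k ≤ N, ∀ q : ℝ[X], q.natDegree < k → Λ (P k * q) = 0

namespace OrthFam

variable {Λ Λ' : ℝ[X] →ₗ[ℝ] ℝ} {M N : ℕ} {P Q : ℕ → ℝ[X]}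

lemma ne_zero (h : OrthFam Λ N P) {k : ℕ} (hk : k ≤ N) : P k ≠ 0 := by
  intro h0
  have := h.lc k hk
  simp [h0] at this

lemma norm_pos (h : OrthFam Λ N P) {k : ℕ} (hk : k ≤ N) : 0 < Λ (P k * P k) :=
  h.pd _ (h.ne_zero hk) ((h.deg k hk).trans hk)

lemma orth_of_coeff (h : OrthFam Λ N P) {k : ℕ} (hk : k ≤ N) {q : ℝ[X]} (hq : q.natDegree ≤ k)
    (hc : q.coeff k = 0) : Λ (P k * q) = 0 := by
  rcases hq.lt_or_eq with h1 | h1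
  · exact h.orth k hk q h1
  · have : q = 0 := by
      rw [← leadingCoeff_eq_zero, leadingCoeff, h1, hc]
    simp [this]

lemma map_mul_C (Λ : ℝ[X] →ₗ[ℝ] ℝ) (c : ℝ) (q : ℝ[X]) : Λ (C c * q) = c * Λ q := by
  rw [C_mul', map_smul, smul_eq_mul]

/-- Pairing `P k` with a polynomial of degree `≤ k` only sees its coefficient of index `k`. -/
lemma pair_top (h : OrthFam Λ N P) {k : ℕ} (hk : k ≤ N) {q : ℝ[X]} (hq : q.natDegree ≤ k) :
    Λ (P k * q) = q.coeff k * (Λ (P k * P k) / (P k).coeff k) := by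
  have hl := h.lc k hk
  have h1 := h.orth_of_coeff hk (q := q - C (q.coeff k / (P k).coeff k) * P k)
    ((natDegree_sub_le_of_le hq ((natDegree_C_mul_le _ _).trans (h.deg k hk))).trans (by simp))
    (by simp [coeff_C_mul]; field_simp; simp)
  rw [mul_sub, map_sub, mul_left_comm, map_mul_C] at h1
  rw [sub_eq_zero.mp h1]
  ring

lemma pair_ne (h : OrthFam Λ N P) {i j : ℕ} (hi : i ≤ N) (hj : j ≤ N) (hij : i ≠ j) :
    Λ (P i * P j) = 0 := by
  rcases lt_or_gt_of_ne hij with h1 | h1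
  · rw [mul_comm]
    exact h.orth j hj _ ((h.deg i hi).trans_lt h1)
  · exact h.orth i hi _ ((h.deg j hj).trans_lt h1)

lemma eq_zero_of_pair (h : OrthFam Λ N P) (φ : ℝ[X] →ₗ[ℝ] ℝ) (hφ : ∀ i ≤ N, φ (P i) = 0) :
    ∀ m ≤ N, ∀ q : ℝ[X], q.natDegree ≤ m → φ q = 0 := by
  intro m
  induction m with
  | zero =>
    intro hm q hq
    have hl := h.lc 0 hm
    have h1 := eq_C_of_natDegree_le_zero hq
    have h2 := eq_C_of_natDegree_le_zero (h.deg 0 hm)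
    have h3 : q = C (q.coeff 0 / (P 0).coeff 0) * P 0 := by
      conv_rhs => rw [h2]
      conv_lhs => rw [h1]
      rw [coeff_C_zero, ← C_mul]
      congr 1
      field_simp
    rw [h3, map_mul_C, hφ 0 hm, mul_zero]
  | succ m ih =>
    intro hm q hq
    have hl := h.lc (m + 1) hm
    set r := q - C (q.coeff (m + 1) / (P (m + 1)).coeff (m + 1)) * P (m + 1) with hr
    have hr1 : r.natDegree ≤ m + 1 :=
      (natDegree_sub_le_of_le hq ((natDegree_C_mul_le _ _).trans (h.deg _ hm))).trans (by simp)
    have hr2 : r.coeff (m + 1) = 0 := by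
      simp [hr, coeff_C_mul]; field_simp; simp
    have hr3 : r.natDegree ≤ m := by
      by_contra! hlt
      have h4 : r.natDegree = m + 1 := by omega
      have h5 : r = 0 := by rw [← leadingCoeff_eq_zero, leadingCoeff, h4, hr2]
      simp [h5] at h4
    have h6 := ih (by omega) r hr3
    rw [hr, map_sub, map_mul_C, hφ _ hm, mul_zero, sub_zero] at h6
    exact h6

lemma sum_pair (h : OrthFam Λ N P) (c : ℕ → ℝ) {j : ℕ} (hj : j ≤ N) :
    Λ ((∑ i ∈ Finset.range (N + 1), C (c i) * P i) * P j) = c j * Λ (P j * P j) := by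
  rw [Finset.sum_mul, map_sum, Finset.sum_eq_single j]
  · rw [mul_assoc, map_mul_C]
  · intro i hi hij
    rw [mul_assoc, map_mul_C, h.pair_ne (by simp at hi; omega) hj hij, mul_zero]
  · intro hj'
    simp at hj'
    omega

lemma expand (h : OrthFam Λ N P) {f : ℝ[X]} (hf : f.natDegree ≤ N) :
    f = ∑ i ∈ Finset.range (N + 1), C (Λ (f * P i) / Λ (P i * P i)) * P i := by
  set g := f - ∑ i ∈ Finset.range (N + 1), C (Λ (f * P i) / Λ (P i * P i)) * P i with hg
  have hdeg : g.natDegree ≤ N := by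
    refine (natDegree_sub_le_of_le hf (natDegree_sum_le_of_forall_le (n := N) _ _ ?_)).trans
      (by simp)
    intro i hi
    have hi' : i ≤ N := by simp at hi; omega
    exact (natDegree_C_mul_le _ _).trans ((h.deg i hi').trans hi')
  have hz := h.eq_zero_of_pair (Λ ∘ₗ LinearMap.mulLeft ℝ g) (by
    intro j hj
    have := h.norm_pos hj
    simp only [LinearMap.comp_apply, LinearMap.mulLeft_apply]
    rw [hg, sub_mul, map_sub, h.sum_pair _ hj]
    field_simp
    simp) N le_rfl g hdeg
  simp only [LinearMap.comp_apply, LinearMap.mulLeft_apply] at hz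
  by_contra hne
  have := h.pd g (fun h0 => hne (sub_eq_zero.mp h0)) hdeg
  linarith

/-- A linear functional that is non-negative on the members of an orthogonal family is
non-negative on every polynomial with non-negative coefficients in that family. -/
lemma nonneg_of_pair (h : OrthFam Λ N P) {f : ℝ[X]} (hf : f.natDegree ≤ N)
    (hc : ∀ i ≤ N, 0 ≤ Λ (f * P i)) (φ : ℝ[X] →ₗ[ℝ] ℝ) (hφ : ∀ i ≤ N, 0 ≤ φ (P i)) :
    0 ≤ φ f := by
  rw [h.expand hf, map_sum]
  refine Finset.sum_nonneg fun i hi => ?_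
  have hi' : i ≤ N := by simp at hi; omega
  rw [map_mul_C]
  exact mul_nonneg (div_nonneg (hc i hi') (h.norm_pos hi').le) (hφ i hi')

lemma mono (h : OrthFam Λ N P) (hMN : M ≤ N) : OrthFam Λ M P where
  pd q hq hd := h.pd q hq (hd.trans hMN)
  deg k hk := h.deg k (hk.trans hMN)
  lc k hk := h.lc k (hk.trans hMN)
  orth k hk := h.orth k (hk.trans hMN)

/-- Gram–Schmidt. -/
lemma exists_of_pd (Λ : ℝ[X] →ₗ[ℝ] ℝ) : ∀ N : ℕ,
    (∀ q : ℝ[X], q ≠ 0 → q.natDegree ≤ N → 0 < Λ (q * q)) → ∃ P, OrthFam Λ N P := by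
  intro N
  induction N with
  | zero =>
    intro hpd
    refine ⟨fun _ => 1, hpd, fun k _ => by simp, fun k hk => ?_, fun k hk q hq => ?_⟩
    · simp [Nat.le_zero.mp hk]
    · omega
  | succ N ih =>
    intro hpd
    obtain ⟨P, h⟩ := ih fun q hq hd => hpd q hq (hd.trans (Nat.le_succ N))
    set s := ∑ i ∈ Finset.range (N + 1), C (Λ (X ^ (N + 1) * P i) / Λ (P i * P i)) * P i with hs
    have hsd : s.natDegree ≤ N := by
      refine natDegree_sum_le_of_forall_le (n := N) _ _ ?_
      intro i hi
      have hi' : i ≤ N := by simp at hi; omega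
      exact (natDegree_C_mul_le _ _).trans ((h.deg i hi').trans hi')
    have key : ∀ k, k ≤ N + 1 → ¬ k ≤ N → k = N + 1 := fun k h1 h2 => by omega
    refine ⟨fun k => if k ≤ N then P k else X ^ (N + 1) - s, hpd, fun k hk => ?_, fun k hk => ?_,
      fun k hk q hq => ?_⟩
    · split_ifs with hkN
      · exact h.deg k hkN
      · rw [key k hk hkN]
        exact (natDegree_sub_le_of_le (natDegree_X_pow_le _) hsd).trans (by simp)
    · split_ifs with hkN
      · exact h.lc k hkN
      · rw [key k hk hkN, coeff_sub, coeff_X_pow, coeff_eq_zero_of_natDegree_lt (p := s) (by omega)]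
        simp
    · split_ifs with hkN
      · exact h.orth k hkN q hq
      · refine h.eq_zero_of_pair (Λ ∘ₗ LinearMap.mulLeft ℝ (X ^ (N + 1) - s)) ?_ N le_rfl q
          (by have := key k hk hkN; omega)
        intro j hj
        have := h.norm_pos hj
        simp only [LinearMap.comp_apply, LinearMap.mulLeft_apply]
        rw [hs, sub_mul, map_sub, h.sum_pair _ hj]
        field_simp
        simp

/-- The orthogonal polynomials are positive at any point `r` for which `(r - t) Λ` is still
positive definite, that is, to the right of the support. The recurrence comes from the
two-term expansion of `(r - t) Q k` in `P (k + 1)` and `P k`. -/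
lemma eval_pos (h : OrthFam Λ N P) (h' : OrthFam Λ' M Q) {r : ℝ}
    (hr : ∀ f, Λ' f = Λ ((C r - X) * f)) :
    ∀ k ≤ N, k ≤ M + 1 → 0 < (P k).eval r := by
  intro k
  induction k with
  | zero =>
    intro hk _
    rw [eq_C_of_natDegree_le_zero (h.deg 0 hk), eval_C]
    exact h.lc 0 hk
  | succ k ih =>
    intro hk hkM
    have hkM' : k ≤ M := by omega
    have hP := ih (by omega) (by omega)
    set g := (C r - X) * Q k with hg
    have hgd : g.natDegree ≤ k + 1 := by
      refine natDegree_mul_le.trans ?_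
      have h1 : (C r - X : ℝ[X]).natDegree ≤ 1 :=
        (natDegree_sub_le_of_le (natDegree_C r).le natDegree_X_le).trans (by simp)
      have h2 := h'.deg k hkM'
      omega
    have hgc : g.coeff (k + 1) = - (Q k).coeff k := by
      have h3 : (Q k).coeff (k + 1) = 0 :=
        coeff_eq_zero_of_natDegree_lt (by have := h'.deg k hkM'; omega)
      rw [hg, sub_mul, coeff_sub, coeff_C_mul, coeff_X_mul, h3]
      simp
    have e := (h.mono hk).expand hgd
    have hpair : ∀ i, Λ (g * P i) = Λ' (Q k * P i) := fun i => by rw [hr, hg, mul_assoc]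
    have hlow : ∀ i ∈ Finset.range k, C (Λ (g * P i) / Λ (P i * P i)) * P i = 0 := by
      intro i hi
      have hi' : i < k := by simpa using hi
      rw [hpair, h'.orth k hkM' (P i) ((h.deg i (by omega)).trans_lt hi')]
      simp
    rw [Finset.sum_range_succ, Finset.sum_range_succ, Finset.sum_eq_zero hlow, zero_add] at e
    have e1 := congrArg (eval r) e
    have hn1 := h.norm_pos hk
    have hn0 := h.norm_pos (k := k) (by omega)
    have ha : 0 < Λ (g * P k) := by
      rw [hpair, h'.pair_top hkM' (h.deg k (by omega))]
      exact mul_pos (h.lc k (by omega)) (div_pos (h'.norm_pos hkM') (h'.lc k hkM'))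
    have hb : Λ (g * P (k + 1)) < 0 := by
      rw [mul_comm, h.pair_top hk hgd, hgc]
      exact mul_neg_of_neg_of_pos (neg_neg_of_pos (h'.lc k hkM')) (div_pos hn1 (h.lc _ hk))
    have hb' := div_neg_of_neg_of_pos hb hn1
    have ha' := div_pos ha hn0
    rw [hg] at e1
    simp only [eval_mul, eval_sub, eval_C, eval_X, sub_self, zero_mul, eval_add] at e1
    rw [← hg] at e1
    by_contra! hneg
    have := mul_pos ha' hP
    have := mul_nonneg_of_nonpos_of_nonpos hb'.le hneg
    linarith

/-- Orthogonal polynomials for `(r - t) Λ`, with `r` to the right of the support of `Λ`, have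
non-negative coefficients in the orthogonal polynomials for `Λ`: they are proportional to the
kernels `∑ P i(r) P i(t) / ‖P i‖²`. -/
lemma christoffel (h : OrthFam Λ N P) (h' : OrthFam Λ' M Q) {r : ℝ}
    (hr : ∀ f, Λ' f = Λ ((C r - X) * f)) {i j : ℕ} (hi : i ≤ N) (hj : j ≤ N) (hjM : j ≤ M) :
    0 ≤ Λ (Q j * P i) := by
  rcases lt_or_ge j i with hij | hij
  · rw [mul_comm, h.orth i hi _ ((h'.deg j hjM).trans_lt hij)]
  have key : ∀ i ≤ j, Λ (Q j * P i) = (P i).eval r * Λ (Q j) := by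
    intro i hij
    have hdi := h.deg i (by omega)
    rcases Nat.eq_zero_or_pos i with h0 | h0
    · subst h0
      rw [eq_C_of_natDegree_le_zero hdi, mul_comm, map_mul_C, eval_C]
    · have hd := modByMonic_add_div (P i) (X - C r)
      rw [modByMonic_X_sub_C_eq_C_eval] at hd
      have hq : ((P i) /ₘ (X - C r)).natDegree < j := by
        rw [natDegree_divByMonic _ (monic_X_sub_C r), natDegree_X_sub_C]
        omega
      have h1 := h'.orth j hjM _ hq
      rw [hr] at h1
      have h2 : Q j * P i = C ((P i).eval r) * Q j
          - (C r - X) * (Q j * (P i /ₘ (X - C r))) := by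
        conv_lhs => rw [← hd]
        ring
      rw [h2, map_sub, h1, map_mul_C, sub_zero]
  have hpos := h.eval_pos h' hr
  have hjj : 0 < Λ (Q j * P j) := by
    rw [mul_comm, h.pair_top hj (h'.deg j hjM)]
    exact mul_pos (h'.lc j hjM) (div_pos (h.norm_pos hj) (h.lc j hj))
  rw [key j le_rfl] at hjj
  rw [key i hij]
  exact mul_nonneg (hpos i hi (by omega)).le
    (pos_of_mul_pos_right hjj (hpos j hj (by omega)).le).le

end OrthFam

/-! ### Discrete measures and Gauss quadrature -/

/-- The functional `f ↦ ∑ i ∈ s, w i * f (β i)`. -/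
def discFun (s : Finset ℕ) (w β : ℕ → ℝ) : ℝ[X] →ₗ[ℝ] ℝ := ∑ i ∈ s, w i • leval (β i)

lemma discFun_apply (s : Finset ℕ) (w β : ℕ → ℝ) (f : ℝ[X]) :
    discFun s w β f = ∑ i ∈ s, w i * f.eval (β i) := by
  simp [discFun, LinearMap.sum_apply, leval_apply]

lemma discFun_pd {s : Finset ℕ} {w β : ℕ → ℝ} (hw : ∀ i ∈ s, 0 < w i)
    (hβ : Set.InjOn β s) {q : ℝ[X]} (hq : q ≠ 0) (hd : q.natDegree < s.card) :
    0 < discFun s w β (q * q) := by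
  rw [discFun_apply]
  have hnn : ∀ i ∈ s, 0 ≤ w i * (q * q).eval (β i) := fun i hi => by
    rw [eval_mul]; exact mul_nonneg (hw i hi).le (mul_self_nonneg _)
  refine lt_of_le_of_ne (Finset.sum_nonneg hnn) fun h0 => hq ?_
  have h1 := (Finset.sum_eq_zero_iff_of_nonneg hnn).mp h0.symm
  refine eq_zero_of_degree_lt_of_eval_index_eq_zero (s := s) (v := β) hβ
    (degree_le_natDegree.trans_lt (by exact_mod_cast hd)) fun i hi => ?_
  have h2 := h1 i hi
  rw [eval_mul] at h2
  rcases mul_eq_zero.mp h2 with h3 | h3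
  · exact absurd h3 (hw i hi).ne'
  · exact mul_self_eq_zero.mp h3

/-- For a discrete measure on decreasing nodes `β k > … > β L`, the partial products
`∏_{l ≥ j} (t - β l)` with `j > k` have non-negative coefficients in the orthogonal polynomials.
The measure `(β k - t) dμ` lives on one node fewer, which gives the induction. -/
lemma discFun_prod_nonneg {L : ℕ} {β : ℕ → ℝ} : ∀ (d k : ℕ) (w : ℕ → ℝ) (P : ℕ → ℝ[X]),
    k + d = L → (∀ i ∈ Finset.Icc k L, 0 < w i) →
    (∀ i ∈ Finset.Icc k L, ∀ j ∈ Finset.Icc k L, i < j → β j < β i) →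
    OrthFam (discFun (Finset.Icc k L) w β) d P → ∀ j ∈ Finset.Icc (k + 1) L, ∀ i ≤ d,
      0 ≤ discFun (Finset.Icc k L) w β ((∏ l ∈ Finset.Icc j L, (X - C (β l))) * P i) := by
  intro d
  induction d with
  | zero =>
    intro k w P hk _ _ _ j hj
    simp only [Finset.mem_Icc] at hj
    omega
  | succ d ih =>
    intro k w P hk hw hβ h j hj i hi
    simp only [Finset.mem_Icc] at hw hβ hj
    set w' : ℕ → ℝ := fun i => w i * (β k - β i) with hw'
    have hkL : k ≤ L := by omega
    have hins : Finset.Icc k L = insert k (Finset.Icc (k + 1) L) := by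
      ext x; simp only [Finset.mem_Icc, Finset.mem_insert]; omega
    have hnot : k ∉ Finset.Icc (k + 1) L := by simp
    have hr : ∀ f, discFun (Finset.Icc (k + 1) L) w' β f =
        discFun (Finset.Icc k L) w β ((C (β k) - X) * f) := by
      intro f
      rw [discFun_apply, discFun_apply, hins, Finset.sum_insert hnot]
      simp [hw', mul_assoc]
    have hw'pos : ∀ i ∈ Finset.Icc (k + 1) L, 0 < w' i := by
      intro i hi
      simp only [Finset.mem_Icc] at hi
      exact mul_pos (hw i (by omega))
        (sub_pos.mpr (hβ k (by omega) i (by omega) (by omega)))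
    have hβ' : ∀ i ∈ Finset.Icc (k + 1) L, ∀ j ∈ Finset.Icc (k + 1) L, i < j → β j < β i := by
      intro i hi j hj
      simp only [Finset.mem_Icc] at hi hj
      exact hβ i (by omega) j (by omega)
    have hinj : Set.InjOn β (Finset.Icc (k + 1) L) := by
      intro a ha b hb hab
      by_contra hne
      rcases lt_or_gt_of_ne hne with h1 | h1
      · exact absurd hab (hβ' a ha b hb h1).ne'
      · exact absurd hab (hβ' b hb a ha h1).ne
    obtain ⟨Q, hQ⟩ := OrthFam.exists_of_pd (discFun (Finset.Icc (k + 1) L) w' β) d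
      fun q hq hd => discFun_pd hw'pos hinj hq (by simp; omega)
    rcases hj.1.eq_or_lt with hjk | hjk
    · rw [← hjk, discFun_apply, hins, Finset.sum_insert hnot, Finset.sum_eq_zero, add_zero]
      · rw [eval_mul, eval_prod]
        refine mul_nonneg (hw k (by omega)).le (mul_nonneg (Finset.prod_nonneg fun l hl => ?_)
          (h.eval_pos hQ hr i hi hi).le)
        simp only [Finset.mem_Icc] at hl
        simpa using (hβ k (by omega) l (by omega) (by omega)).le
      · intro l hl
        rw [eval_mul, eval_prod, Finset.prod_eq_zero hl (by simp)]
        simp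
    · have hdeg : (∏ l ∈ Finset.Icc j L, (X - C (β l))).natDegree ≤ d := by
        rw [natDegree_finsetProd_X_sub_C_eq_card, Nat.card_Icc]
        omega
      refine hQ.nonneg_of_pair hdeg (fun m hm => ?_)
        (discFun (Finset.Icc k L) w β ∘ₗ LinearMap.mulRight ℝ (P i)) fun m hm => ?_
      · exact ih (k + 1) w' Q (by omega) hw'pos hβ' hQ j (by simp; omega) m hm
      · exact h.christoffel hQ hr hi (by omega) hm

/-- Gauss quadrature: a nodal polynomial of degree `L` that is orthogonal to degree `≤ L - 2` gives
a quadrature rule with positive weights, exact in degree `≤ 2L - 2`. -/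
lemma exists_quadrature {L : ℕ} (hL : 2 ≤ L) {β : ℕ → ℝ} {Λ : ℝ[X] →ₗ[ℝ] ℝ}
    (hinj : Set.InjOn β (Finset.Icc 1 L))
    (hpd : ∀ q : ℝ[X], q ≠ 0 → 0 < Λ (q * q))
    (horth : ∀ q : ℝ[X], q.natDegree ≤ L - 2 →
      Λ ((∏ i ∈ Finset.Icc 1 L, (X - C (β i))) * q) = 0) :
    ∃ w : ℕ → ℝ, (∀ i ∈ Finset.Icc 1 L, 0 < w i) ∧
      ∀ f : ℝ[X], f.natDegree ≤ 2 * L - 2 → Λ f = discFun (Finset.Icc 1 L) w β f := by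
  set w : ℕ → ℝ := fun i => Λ (Lagrange.basis (Finset.Icc 1 L) β i) with hw
  set W := ∏ i ∈ Finset.Icc 1 L, (X - C (β i)) with hW
  have hmon : W.Monic := monic_prod_of_monic _ _ fun i _ => monic_X_sub_C _
  have hWd : W.natDegree = L := by
    rw [hW, natDegree_finsetProd_X_sub_C_eq_card, Nat.card_Icc]; omega
  have hquad : ∀ f : ℝ[X], f.natDegree ≤ 2 * L - 2 →
      Λ f = discFun (Finset.Icc 1 L) w β f := by
    intro f hf
    have hd := modByMonic_add_div f W
    have hq : (f /ₘ W).natDegree ≤ L - 2 := by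
      rw [natDegree_divByMonic _ hmon, hWd]; omega
    have hrd : (f %ₘ W).degree < (Finset.Icc 1 L).card := by
      refine (degree_modByMonic_lt f hmon).trans_le ?_
      rw [degree_eq_natDegree hmon.ne_zero, hWd]; simp
    have h1 : Λ f = Λ (f %ₘ W) := by
      conv_lhs => rw [← hd]
      rw [map_add, horth _ hq, add_zero]
    rw [h1, Lagrange.eq_interpolate hinj hrd, Lagrange.interpolate_apply, map_sum, discFun_apply]
    refine Finset.sum_congr rfl fun i hi => ?_
    rw [OrthFam.map_mul_C, mul_comm]
    congr 1
    have h2 : W.eval (β i) = 0 := by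
      rw [hW, eval_prod]; exact Finset.prod_eq_zero hi (by simp)
    conv_rhs => rw [← hd]
    rw [eval_add, eval_mul, h2]
    simp
  refine ⟨w, fun i hi => ?_, hquad⟩
  have hdb := Lagrange.natDegree_basis hinj hi
  rw [Nat.card_Icc] at hdb
  have h1 := hpd _ (Lagrange.basis_ne_zero hinj hi)
  rw [hquad _ (natDegree_mul_le.trans (by omega)), discFun_apply, Finset.sum_eq_single i] at h1
  · rwa [eval_mul, Lagrange.eval_basis_self hinj hi, mul_one, mul_one] at h1
  · intro j hj hji
    rw [eval_mul, Lagrange.eval_basis_of_ne hji.symm hj]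
    simp
  · exact fun h => absurd hi h

/-- The partial products of `Π_L` with at least one factor removed have non-negative coefficients
in the orthogonal polynomials. -/
lemma prod_nonneg_of_orth {L : ℕ} (hL : 2 ≤ L) {β : ℕ → ℝ} {Λ : ℝ[X] →ₗ[ℝ] ℝ}
    {P : ℕ → ℝ[X]} (h : OrthFam Λ (L - 1) P)
    (hβ : ∀ i ∈ Finset.Icc 1 L, ∀ j ∈ Finset.Icc 1 L, i < j → β j < β i)
    (hpd : ∀ q : ℝ[X], q ≠ 0 → 0 < Λ (q * q))
    (horth : ∀ q : ℝ[X], q.natDegree ≤ L - 2 →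
      Λ ((∏ i ∈ Finset.Icc 1 L, (X - C (β i))) * q) = 0) :
    ∀ k ∈ Finset.Icc 2 L, ∀ i ≤ L - 1, 0 ≤ Λ ((∏ l ∈ Finset.Icc k L, (X - C (β l))) * P i) := by
  have hinj : Set.InjOn β (Finset.Icc 1 L) := by
    intro a ha b hb hab
    by_contra hne
    rcases lt_or_gt_of_ne hne with h1 | h1
    · exact absurd hab (hβ a ha b hb h1).ne'
    · exact absurd hab (hβ b hb a ha h1).ne
  obtain ⟨w, hw, hquad⟩ := exists_quadrature hL hinj hpd horth
  have h' : OrthFam (discFun (Finset.Icc 1 L) w β) (L - 1) P := by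
    refine ⟨fun q hq hd => ?_, h.deg, h.lc, fun k hk q hq => ?_⟩
    · rw [← hquad _ (natDegree_mul_le.trans (by omega))]
      exact hpd q hq
    · have := h.deg k hk
      rw [← hquad _ (natDegree_mul_le.trans (by omega))]
      exact h.orth k hk q hq
  intro k hk i hi
  have hdi := h.deg i hi
  have hdeg : (∏ l ∈ Finset.Icc k L, (X - C (β l))).natDegree ≤ L - 1 := by
    simp only [Finset.mem_Icc] at hk
    rw [natDegree_finsetProd_X_sub_C_eq_card, Nat.card_Icc]
    omega
  rw [hquad _ (natDegree_mul_le.trans (by omega))]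
  exact discFun_prod_nonneg (L - 1) 1 w P (by omega) hw hβ h' k hk i hi

/-! ### A discrete boundary value problem -/

/-- Summing the discrete wave equation over the triangle below `(d + m, m)` expresses the value at
the apex through the values on the two lower edges. -/
lemma triangle_sum {α : ℕ → ℝ} {u : ℕ → ℕ → ℝ} (h0 : α 0 = 0)
    (H0 : ∀ i, α 1 * u (i + 1) 1 = α (i + 2) * u (i + 2) 0 + (1 - α i) * u i 0)
    (H1 : ∀ i j, α (j + 2) * u (i + 1) (j + 2) + (1 - α j) * u (i + 1) j =
      α (i + 2) * u (i + 2) (j + 1) + (1 - α i) * u i (j + 1)) :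
    ∀ m d, α m * u (d + m) m = ∑ j ∈ Finset.range m,
      ((α (d + 2 * m - j) - α j) * u (d + 2 * m - j) j
        + (1 - α (d + j) - α j) * u (d + j) j) := by
  intro m
  induction m using Nat.strong_induction_on with
  | _ m ih =>
    match m with
    | 0 => intro d; simp [h0]
    | 1 =>
      intro d
      simp only [Finset.sum_range_one, h0, Nat.sub_zero, add_zero, mul_one, sub_zero]
      exact H0 d
    | m + 2 =>
      intro d
      have e1 := ih (m + 1) (by omega) (d + 2)
      have e2 := ih (m + 1) (by omega) d
      have e3 := ih m (by omega) (d + 2)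
      have e := H1 (d + m + 1) m
      rw [Finset.sum_range_succ] at e1 e2
      rw [Finset.sum_range_succ, Finset.sum_range_succ]
      have i1 : d + 2 + 2 * (m + 1) = d + 2 * (m + 2) := by ring
      have i2 : d + 2 * (m + 1) = d + 2 + 2 * m := by ring
      rw [i1] at e1
      rw [i2] at e2
      simp only [Finset.sum_add_distrib] at e1 e2 e3 ⊢
      have j1 : d + 2 * (m + 2) - (m + 1) = d + m + 3 := by omega
      have j2 : d + 2 * (m + 2) - m = d + m + 4 := by omega
      have j3 : d + 2 + 2 * m - m = d + m + 2 := by omega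
      have j4 : d + 2 + m = d + m + 2 := by omega
      have j5 : d + 2 + (m + 1) = d + m + 3 := by omega
      have j6 : d + (m + 1) = d + m + 1 := by omega
      have j7 : d + (m + 2) = d + m + 2 := by omega
      have j8 : d + m + 1 + 1 = d + m + 2 := by omega
      have j9 : d + m + 1 + 2 = d + m + 3 := by omega
      simp only [j1, j2, j3, j4, j5, j6, j7, j8, j9] at e e1 e2 e3 ⊢
      linear_combination e + e1 + e2 - e3

/-- A solution of the discrete wave equation that is symmetric and non-negative on the boundary
`j = 0` is non-negative. -/
lemma wave_nonneg {α : ℕ → ℝ} {u : ℕ → ℕ → ℝ} (h0 : α 0 = 0) (hpos : ∀ j, 0 < α (j + 1))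
    (hhalf : ∀ j, α j ≤ 1 / 2) (hmono : Monotone α)
    (H0 : ∀ i, α 1 * u (i + 1) 1 = α (i + 2) * u (i + 2) 0 + (1 - α i) * u i 0)
    (H1 : ∀ i j, α (j + 2) * u (i + 1) (j + 2) + (1 - α j) * u (i + 1) j =
      α (i + 2) * u (i + 2) (j + 1) + (1 - α i) * u i (j + 1))
    (hb : ∀ i, 0 ≤ u i 0) (hsymm : ∀ i j, u i j = u j i) (i j : ℕ) : 0 ≤ u i j := by
  have main : ∀ m d, 0 ≤ u (d + m) m := by
    intro m
    induction m using Nat.strong_induction_on with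
    | _ m ih =>
      intro d
      rcases m with _ | m
      · exact hb _
      · have e := triangle_sum h0 H0 H1 (m + 1) d
        refine nonneg_of_mul_nonneg_right (a := α (m + 1)) ?_ (hpos m)
        rw [e]
        refine Finset.sum_nonneg fun j hj => ?_
        have hj' : j < m + 1 := by simpa using hj
        have u1 := ih j hj' (d + 2 * (m + 1) - j - j)
        rw [show d + 2 * (m + 1) - j - j + j = d + 2 * (m + 1) - j by omega] at u1
        have u2 := ih j hj' d
        have a1 : α j ≤ α (d + 2 * (m + 1) - j) := hmono (by omega)
        have a2 := hhalf j
        have a3 := hhalf (d + j)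
        exact add_nonneg (mul_nonneg (by linarith) u1) (mul_nonneg (by linarith) u2)
  rcases le_total j i with h | h
  · have := main j (i - j)
    rwa [Nat.sub_add_cancel h] at this
  · have := main i (j - i)
    rwa [Nat.sub_add_cancel h, hsymm] at this

/-! ### The explicit orthogonal families -/

/-- The coefficients of the recurrence
`x p_j = α (j + 1) p_{j + 1} + (1 - α (j - 1)) p_{j - 1}` of suitably normalised Gegenbauer
polynomials with parameter `(n - 2) / 2`. For `n = 2` the value at `j = 0` is `0 / 0 = 0`, which
is the intended one. -/
def geg (n j : ℕ) : ℝ := j / (2 * j + n - 2)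

/-- The polynomial `(1 + t) / 2`, which is `x ^ 2` for the Gegenbauer variable `x`. -/
def halfS : ℝ[X] := C (1 / 2) * (1 + X)

/-- The pairs `(E k, O k)` with `p_{2k} = E k (t)` and `p_{2k+1} = x * O k (t)`, where
`x ^ 2 = (1 + t) / 2` and `p_j` are the polynomials with recurrence coefficients `geg n`. -/
def famEO (n : ℕ) : ℕ → ℝ[X] × ℝ[X]
  | 0 => (1, C (geg n 1)⁻¹)
  | k + 1 =>
    let E := C (geg n (2 * k + 2))⁻¹ *
      (halfS * (famEO n k).2 - C (1 - geg n (2 * k)) * (famEO n k).1)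
    (E, C (geg n (2 * k + 3))⁻¹ * (E - C (1 - geg n (2 * k + 1)) * (famEO n k).2))

/-- The even part `p_{2k}(x) = E k (t)` of the Gegenbauer family. -/
def famE (n k : ℕ) : ℝ[X] := (famEO n k).1

/-- The factor `O k (t)` of the odd member `p_{2k+1}(x) = x * O k (t)` of the Gegenbauer family. -/
def famO (n k : ℕ) : ℝ[X] := (famEO n k).2

section family
variable {n : ℕ}

lemma geg_zero : geg n 0 = 0 := by simp [geg]

lemma geg_pos (hn : 2 ≤ n) (j : ℕ) : 0 < geg n (j + 1) := by
  have : (2 : ℝ) ≤ n := by exact_mod_cast hn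
  unfold geg
  push_cast
  apply div_pos <;> linarith [(Nat.cast_nonneg j : (0 : ℝ) ≤ j)]

lemma geg_le_half (hn : 2 ≤ n) (j : ℕ) : geg n j ≤ 1 / 2 := by
  rcases j with _ | j
  · rw [geg_zero]; norm_num
  have : (2 : ℝ) ≤ n := by exact_mod_cast hn
  have hj : (0 : ℝ) ≤ j := Nat.cast_nonneg j
  unfold geg
  push_cast
  rw [div_le_div_iff₀ (by linarith) (by norm_num)]
  linarith

lemma geg_mono (hn : 2 ≤ n) : Monotone (geg n) := by
  refine monotone_nat_of_le_succ fun j => ?_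
  rcases j with _ | j
  · rw [geg_zero]; exact (geg_pos hn 0).le
  have : (2 : ℝ) ≤ n := by exact_mod_cast hn
  have hj : (0 : ℝ) ≤ j := Nat.cast_nonneg j
  unfold geg
  push_cast
  rw [div_le_div_iff₀ (by linarith) (by linarith)]
  nlinarith

lemma famE_zero : famE n 0 = 1 := rfl

lemma famO_zero_rel (hn : 2 ≤ n) : C (geg n 1) * famO n 0 = 1 := by
  change C (geg n 1) * C (geg n 1)⁻¹ = 1
  rw [← C_mul, mul_inv_cancel₀ (geg_pos hn 0).ne', C_1]

lemma famE_rel (hn : 2 ≤ n) (k : ℕ) :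
    C (geg n (2 * k + 2)) * famE n (k + 1) + C (1 - geg n (2 * k)) * famE n k
      = halfS * famO n k := by
  change C (geg n (2 * k + 2)) * (C (geg n (2 * k + 2))⁻¹ *
    (halfS * famO n k - C (1 - geg n (2 * k)) * famE n k)) + _ = _
  rw [← mul_assoc, ← C_mul, mul_inv_cancel₀ (geg_pos hn _).ne', C_1]
  ring

lemma famO_rel (hn : 2 ≤ n) (k : ℕ) :
    C (geg n (2 * k + 3)) * famO n (k + 1) + C (1 - geg n (2 * k + 1)) * famO n k
      = famE n (k + 1) := by
  change C (geg n (2 * k + 3)) * (C (geg n (2 * k + 3))⁻¹ *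
    (famE n (k + 1) - C (1 - geg n (2 * k + 1)) * famO n k)) + _ = _
  rw [← mul_assoc, ← C_mul, mul_inv_cancel₀ (geg_pos hn _).ne', C_1]
  ring

lemma fam_deg (hn : 2 ≤ n) (k : ℕ) :
    (famE n k).natDegree ≤ k ∧ 0 < (famE n k).coeff k ∧
      (famO n k).natDegree ≤ k ∧ 0 < (famO n k).coeff k := by
  induction k with
  | zero =>
    refine ⟨by simp [famE_zero], by simp [famE_zero], ?_, ?_⟩
    · exact (natDegree_C _).le
    · change 0 < (C (geg n 1)⁻¹ : ℝ[X]).coeff 0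
      rw [coeff_C_zero]
      exact inv_pos.mpr (geg_pos hn 0)
  | succ k ih =>
    obtain ⟨h1, h2, h3, h4⟩ := ih
    have hS : halfS.natDegree ≤ 1 := by
      refine (natDegree_C_mul_le _ _).trans ((natDegree_add_le _ _).trans ?_)
      simp
    have e1 : famE n (k + 1) = C (geg n (2 * k + 2))⁻¹ *
        (halfS * famO n k - C (1 - geg n (2 * k)) * famE n k) := rfl
    have e2 : famO n (k + 1) = C (geg n (2 * k + 3))⁻¹ *
        (famE n (k + 1) - C (1 - geg n (2 * k + 1)) * famO n k) := rfl
    have g1 : (famE n (k + 1)).natDegree ≤ k + 1 := by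
      rw [e1]
      refine (natDegree_C_mul_le _ _).trans ((natDegree_sub_le_of_le (m := k + 1) (n := k)
        (natDegree_mul_le.trans (by omega))
        ((natDegree_C_mul_le _ _).trans h1)).trans (by simp))
    have hE0 : (famE n k).coeff (k + 1) = 0 := coeff_eq_zero_of_natDegree_lt (by omega)
    have hO0 : (famO n k).coeff (k + 1) = 0 := coeff_eq_zero_of_natDegree_lt (by omega)
    have g2 : 0 < (famE n (k + 1)).coeff (k + 1) := by
      rw [e1, halfS, coeff_C_mul, coeff_sub, mul_assoc, coeff_C_mul, add_mul, coeff_add,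
        coeff_X_mul, one_mul, coeff_C_mul, hE0, hO0]
      have := inv_pos.mpr (geg_pos hn (2 * k + 1))
      simp only [zero_add, mul_zero, sub_zero]
      positivity
    refine ⟨g1, g2, ?_, ?_⟩
    · rw [e2]
      exact (natDegree_C_mul_le _ _).trans ((natDegree_sub_le_of_le (m := k + 1) (n := k) g1
        ((natDegree_C_mul_le _ _).trans h3)).trans (by simp))
    · rw [e2, coeff_C_mul, coeff_sub, coeff_C_mul, hO0, mul_zero, sub_zero]
      exact mul_pos (inv_pos.mpr (geg_pos hn (2 * k + 2))) g2

/-- Closed form of the moments of the explicit families, for any functional whose moments satisfy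
the two-term recurrence of the Beta integral. The factor `∏ l < k, (r - l)` on the right gives the
orthogonality to degrees `r < k`. -/
lemma fam_moments (hn : 2 ≤ n) {Λ : ℝ[X] →ₗ[ℝ] ℝ}
    (hm : ∀ r : ℕ, Λ (halfS ^ (r + 1)) * (2 * r + n) = Λ (halfS ^ r) * (2 * r + 1)) (k : ℕ) :
    ∃ A B : ℝ, 0 < A ∧ 0 < B ∧ B * (2 * k + 1) = (1 - geg n (2 * k)) * A * (4 * k + n) ∧
      (∀ r : ℕ, Λ (famE n k * halfS ^ r) * ∏ l ∈ Finset.range k, (2 * (r : ℝ) + n + 2 * l) =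
        A * Λ (halfS ^ r) * ∏ l ∈ Finset.range k, ((r : ℝ) - l)) ∧
      ∀ r : ℕ, Λ (famO n k * halfS ^ (r + 1)) *
          ∏ l ∈ Finset.range k, (2 * ((r : ℝ) + 1) + n + 2 * l) =
        B * Λ (halfS ^ (r + 1)) * ∏ l ∈ Finset.range k, ((r : ℝ) - l) := by
  have hn' : (2 : ℝ) ≤ n := by exact_mod_cast hn
  have shift : ∀ (k : ℕ) (r : ℝ), (2 * r + n) *
      ∏ l ∈ Finset.range k, (2 * (r + 1) + n + 2 * l) =
      (∏ l ∈ Finset.range k, (2 * r + n + 2 * l)) * (2 * r + n + 2 * k) := by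
    intro k r
    rw [← Finset.prod_range_succ (fun l : ℕ => (2 * r + n + 2 * (l : ℝ))),
      Finset.prod_range_succ', mul_comm]
    congr 1
    · refine Finset.prod_congr rfl fun l _ => ?_
      push_cast; ring
    · simp
  have shiftD : ∀ (k : ℕ) (r : ℝ), (∏ l ∈ Finset.range (k + 1), (r + 1 - l)) =
      (r + 1) * ∏ l ∈ Finset.range k, (r - l) := by
    intro k r
    rw [Finset.prod_range_succ', mul_comm]
    congr 1
    · simp
    · refine Finset.prod_congr rfl fun l _ => ?_
      push_cast; ring
  induction k with
  | zero =>
    refine ⟨1, (geg n 1)⁻¹, one_pos, inv_pos.mpr (geg_pos hn 0), ?_, fun r => ?_, fun r => ?_⟩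
    · simp [geg]
    · simp [famE_zero]
    · have : famO n 0 = C (geg n 1)⁻¹ := rfl
      rw [this, OrthFam.map_mul_C]
      simp
  | succ k ih =>
    obtain ⟨A, B, hA, hB, hI, hE, hO⟩ := ih
    have hk : (0 : ℝ) ≤ k := Nat.cast_nonneg k
    have g2 := geg_pos hn (2 * k + 1)
    have g3 := geg_pos hn (2 * k + 2)
    set a2 := geg n (2 * k + 2) with ha2
    set a3 := geg n (2 * k + 3) with ha3
    have d1 : (0 : ℝ) < 4 * k + n := by linarith
    have d2 : (0 : ℝ) < 2 * k + n - 1 := by linarith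
    have d3 : (0 : ℝ) < 4 * k + 2 + n := by linarith
    have d4 : (0 : ℝ) < 2 * k + n := by linarith
    set A' := B * (2 * (2 * k + n - 1)) / (4 * k + n) / a2 with hA'
    set B' := A' * (2 * k + n) / (4 * k + 2 + n) / a3 with hB'
    have hA'pos : 0 < A' := by positivity
    have hB'pos : 0 < B' := by positivity
    have v1 : 1 - geg n (2 * k + 1) = (2 * k + n - 1) / (4 * k + n) := by
      unfold geg; push_cast
      rw [eq_div_iff d1.ne', sub_mul, div_mul_eq_mul_div, one_mul, sub_eq_iff_eq_add,
        ← sub_eq_iff_eq_add', eq_div_iff (by linarith)]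
      ring
    have v2 : a2 = (2 * k + 2) / (4 * k + 2 + n) := by
      rw [ha2]; unfold geg; push_cast; congr 1; ring
    have v3 : a3 = (2 * k + 3) / (4 * k + 4 + n) := by
      rw [ha3]; unfold geg; push_cast; congr 1; ring
    have rA : A' * (k + 1) = (1 - geg n (2 * k + 1)) * B * (4 * k + 2 + n) := by
      rw [v1, hA', v2]; field_simp
    have hE' : ∀ r : ℕ, Λ (famE n (k + 1) * halfS ^ r) *
        ∏ l ∈ Finset.range (k + 1), (2 * (r : ℝ) + n + 2 * l) =
        A' * Λ (halfS ^ r) * ∏ l ∈ Finset.range (k + 1), ((r : ℝ) - l) := by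
      intro r
      have e := congrArg (fun p => Λ (p * halfS ^ r)) (famE_rel hn k)
      simp only [add_mul, map_add] at e
      rw [mul_assoc, mul_assoc, OrthFam.map_mul_C, OrthFam.map_mul_C,
        show halfS * famO n k * halfS ^ r = famO n k * halfS ^ (r + 1) by ring] at e
      have er := hE r
      have or' := hO r
      have sh := shift k r
      have mr := hm r
      have hr0 : (0 : ℝ) < 2 * r + n := by positivity
      rw [Finset.prod_range_succ, Finset.prod_range_succ]
      set D := ∏ l ∈ Finset.range k, ((r : ℝ) - l)
      set Q1 := ∏ l ∈ Finset.range k, (2 * ((r : ℝ) + 1) + n + 2 * l)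
      set Q0 := ∏ l ∈ Finset.range k, (2 * (r : ℝ) + n + 2 * l)
      set y := Λ (famE n (k + 1) * halfS ^ r)
      set z := Λ (famO n k * halfS ^ (r + 1))
      set x := Λ (famE n k * halfS ^ r)
      set m0 := Λ (halfS ^ r)
      set m1 := Λ (halfS ^ (r + 1))
      have step : a2 * (y * (Q0 * (2 * r + n + 2 * k))) =
          m0 * D * (B * (2 * r + 1) - (1 - geg n (2 * k)) * A * (2 * r + n + 2 * k)) := by
        linear_combination (Q0 * (2 * r + n + 2 * k)) * e - z * sh + (2 * r + n) * or'
          + B * D * mr - (1 - geg n (2 * k)) * (2 * r + n + 2 * k) * er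
      have br : (B * (2 * r + 1) - (1 - geg n (2 * k)) * A * (2 * r + n + 2 * k)) =
          a2 * A' * (r - k) := by
        have i1 : (1 - geg n (2 * k)) * A = B * (2 * k + 1) / (4 * k + n) := by
          rw [eq_div_iff d1.ne', hI]
        rw [i1, hA']
        field_simp
        ring
      apply mul_left_cancel₀ g2.ne'
      rw [step, br]
      ring
    refine ⟨A', B', hA'pos, hB'pos, ?_, hE', fun r => ?_⟩
    · have v4 : 1 - geg n (2 * (k + 1)) = (2 * k + n) / (4 * k + 2 + n) := by
        have : geg n (2 * (k + 1)) = a2 := by rw [ha2]; congr 1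
        rw [this, v2]; field_simp; ring
      push_cast
      rw [v4, hB', v3]; field_simp; ring
    · have e := congrArg (fun p => Λ (p * halfS ^ (r + 1))) (famO_rel hn k)
      simp only [add_mul, map_add] at e
      rw [mul_assoc, mul_assoc, OrthFam.map_mul_C, OrthFam.map_mul_C] at e
      have er := hE' (r + 1)
      have or' := hO r
      have sD := shiftD k r
      push_cast at er
      rw [sD] at er
      rw [Finset.prod_range_succ] at er ⊢
      rw [Finset.prod_range_succ]
      set D := ∏ l ∈ Finset.range k, ((r : ℝ) - l)
      set Q1 := ∏ l ∈ Finset.range k, (2 * ((r : ℝ) + 1) + n + 2 * l)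
      set y := Λ (famO n (k + 1) * halfS ^ (r + 1))
      set z := Λ (famO n k * halfS ^ (r + 1))
      set x := Λ (famE n (k + 1) * halfS ^ (r + 1))
      set m1 := Λ (halfS ^ (r + 1))
      have step : a3 * (y * (Q1 * (2 * (r + 1) + n + 2 * k))) =
          m1 * D * (A' * (r + 1) -
            (1 - geg n (2 * k + 1)) * B * (2 * (r + 1) + n + 2 * k)) := by
        linear_combination (Q1 * (2 * (r + 1) + n + 2 * k)) * e + er
          - (1 - geg n (2 * k + 1)) * (2 * (r + 1) + n + 2 * k) * or'
      have br : (A' * (r + 1) - (1 - geg n (2 * k + 1)) * B * (2 * (r + 1) + n + 2 * k)) =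
          a3 * B' * (r - k) := by
        have i1 : (1 - geg n (2 * k + 1)) * B = A' * (k + 1) / (4 * k + 2 + n) := by
          rw [eq_div_iff d3.ne', rA]
        rw [i1, hB']
        field_simp
        ring
      apply mul_left_cancel₀ g3.ne'
      rw [step, br]
      ring

/-- This holds because polynomials of degree `< k` are combinations of the `halfS ^ r`, `r < k`. -/
lemma eq_zero_of_halfS_pow (φ : ℝ[X] →ₗ[ℝ] ℝ) {k : ℕ} (hφ : ∀ r < k, φ (halfS ^ r) = 0)
    {q : ℝ[X]} (hq : q.natDegree < k) : φ q = 0 := by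
  set p := q.comp (C 2 * X - 1) with hp
  have hpd : p.natDegree < k := by
    refine (natDegree_comp_le.trans ?_).trans_lt hq
    have : (C 2 * X - 1 : ℝ[X]).natDegree ≤ 1 := by
      refine (natDegree_sub_le_of_le (natDegree_C_mul_le _ _) (natDegree_one).le).trans ?_
      simp
    nlinarith
  have hq' : q = p.comp halfS := by
    rw [hp, comp_assoc]
    have : (C 2 * X - 1 : ℝ[X]).comp halfS = X := by
      simp only [sub_comp, mul_comp, C_comp, X_comp, one_comp, halfS]
      rw [← mul_assoc, ← C_mul]
      norm_num
    rw [this, comp_X]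
  rw [hq', comp_eq_sum_left, sum_over_range' _ (by simp) k hpd, map_sum]
  refine Finset.sum_eq_zero fun r hr => ?_
  rw [OrthFam.map_mul_C, hφ r (by simpa using hr), mul_zero]

lemma famE_orth (hn : 2 ≤ n) {Λ : ℝ[X] →ₗ[ℝ] ℝ} (hpd : ∀ q : ℝ[X], q ≠ 0 → 0 < Λ (q * q))
    (hm : ∀ r : ℕ, Λ (halfS ^ (r + 1)) * (2 * r + n) = Λ (halfS ^ r) * (2 * r + 1)) (N : ℕ) :
    OrthFam Λ N (famE n) := by
  refine ⟨fun q hq _ => hpd q hq, fun k _ => (fam_deg hn k).1, fun k _ => (fam_deg hn k).2.1,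
    fun k _ q hq => ?_⟩
  obtain ⟨A, B, -, -, -, hE, -⟩ := fam_moments hn hm k
  refine eq_zero_of_halfS_pow (Λ ∘ₗ LinearMap.mulLeft ℝ (famE n k)) (fun r hr => ?_) hq
  simp only [LinearMap.comp_apply, LinearMap.mulLeft_apply]
  have h := hE r
  rw [Finset.prod_eq_zero (f := fun l : ℕ => (r : ℝ) - l) (Finset.mem_range.mpr hr) (sub_self _),
    mul_zero] at h
  refine (mul_eq_zero.mp h).resolve_right (Finset.prod_pos fun l _ => ?_).ne'
  have : (2 : ℝ) ≤ n := by exact_mod_cast hn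
  positivity

lemma famO_orth (hn : 2 ≤ n) {Λ Λ' : ℝ[X] →ₗ[ℝ] ℝ} (hpd : ∀ q : ℝ[X], q ≠ 0 → 0 < Λ' (q * q))
    (hΛ : ∀ f, Λ' f = Λ ((1 + X) * f))
    (hm : ∀ r : ℕ, Λ (halfS ^ (r + 1)) * (2 * r + n) = Λ (halfS ^ r) * (2 * r + 1)) (N : ℕ) :
    OrthFam Λ' N (famO n) := by
  refine ⟨fun q hq _ => hpd q hq, fun k _ => (fam_deg hn k).2.2.1,
    fun k _ => (fam_deg hn k).2.2.2, fun k _ q hq => ?_⟩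
  obtain ⟨A, B, -, -, -, -, hO⟩ := fam_moments hn hm k
  refine eq_zero_of_halfS_pow (Λ' ∘ₗ LinearMap.mulLeft ℝ (famO n k)) (fun r hr => ?_) hq
  simp only [LinearMap.comp_apply, LinearMap.mulLeft_apply]
  have h := hO r
  rw [Finset.prod_eq_zero (f := fun l : ℕ => (r : ℝ) - l) (Finset.mem_range.mpr hr) (sub_self _),
    mul_zero] at h
  have h2 : Λ (famO n k * halfS ^ (r + 1)) = 0 := by
    refine (mul_eq_zero.mp h).resolve_right (Finset.prod_pos fun l _ => ?_).ne'
    have : (2 : ℝ) ≤ n := by exact_mod_cast hn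
    positivity
  have h3 : (1 + X : ℝ[X]) = C 2 * halfS := by
    rw [halfS, ← mul_assoc, ← C_mul]; norm_num
  rw [hΛ, h3, show C 2 * halfS * (famO n k * halfS ^ r) = C 2 * (famO n k * halfS ^ (r + 1)) by
    ring, OrthFam.map_mul_C, h2, mul_zero]

/-- The products `p_i p_j` with `i + j` even, written as polynomials in `t`; zero if `i + j` is
odd. -/
def famProd (n i j : ℕ) : ℝ[X] :=
  if i % 2 = 0 ∧ j % 2 = 0 then famE n (i / 2) * famE n (j / 2)
  else if i % 2 = 1 ∧ j % 2 = 1 then halfS * (famO n (i / 2) * famO n (j / 2))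
  else 0

lemma famProd_even (i j : ℕ) : famProd n (2 * i) (2 * j) = famE n i * famE n j := by
  simp [famProd]

lemma famProd_odd (i j : ℕ) :
    famProd n (2 * i + 1) (2 * j + 1) = halfS * (famO n i * famO n j) := by
  have h1 : (2 * i + 1) / 2 = i := by omega
  have h2 : (2 * j + 1) / 2 = j := by omega
  simp [famProd, Nat.add_mod, h1, h2]

lemma famProd_even_odd (i j : ℕ) : famProd n (2 * i) (2 * j + 1) = 0 := by
  simp [famProd, Nat.add_mod]

lemma famProd_odd_even (i j : ℕ) : famProd n (2 * i + 1) (2 * j) = 0 := by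
  simp [famProd, Nat.add_mod]

lemma famProd_symm (i j : ℕ) : famProd n i j = famProd n j i := by
  unfold famProd
  simp only [and_comm, mul_comm]

lemma famProd_H0 (hn : 2 ≤ n) (i : ℕ) : C (geg n 1) * famProd n (i + 1) 1 =
    C (geg n (i + 2)) * famProd n (i + 2) 0 + C (1 - geg n i) * famProd n i 0 := by
  rcases Nat.even_or_odd' i with ⟨k, rfl | rfl⟩
  · have a := famProd_odd (n := n) k 0
    have b := famProd_even (n := n) (k + 1) 0
    have c := famProd_even (n := n) k 0
    rw [show 2 * (k + 1) = 2 * k + 2 by ring] at b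
    simp only [mul_zero, zero_add] at a b c
    rw [a, b, c, famE_zero]
    linear_combination halfS * famO n k * famO_zero_rel hn - famE_rel hn k
  · have a := famProd_even_odd (n := n) (k + 1) 0
    have b := famProd_odd_even (n := n) (k + 1) 0
    have c := famProd_odd_even (n := n) k 0
    rw [show 2 * (k + 1) = 2 * k + 1 + 1 by ring] at a
    rw [show 2 * (k + 1) + 1 = 2 * k + 1 + 2 by ring] at b
    simp only [mul_zero, zero_add] at a b c
    rw [a, b, c]
    simp

lemma famProd_H1 (hn : 2 ≤ n) (i j : ℕ) :
    C (geg n (j + 2)) * famProd n (i + 1) (j + 2) + C (1 - geg n j) * famProd n (i + 1) j =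
      C (geg n (i + 2)) * famProd n (i + 2) (j + 1) + C (1 - geg n i) * famProd n i (j + 1) := by
  rcases Nat.even_or_odd' i with ⟨k, rfl | rfl⟩ <;>
    rcases Nat.even_or_odd' j with ⟨l, rfl | rfl⟩
  · rw [show 2 * l + 2 = 2 * (l + 1) by ring, show 2 * k + 2 = 2 * (k + 1) by ring,
      famProd_odd_even, famProd_odd_even, famProd_even_odd, famProd_even_odd]
    simp
  · have a := famProd_odd (n := n) k (l + 1)
    have b := famProd_even (n := n) (k + 1) (l + 1)
    have c := famProd_even (n := n) k (l + 1)
    rw [show 2 * (l + 1) + 1 = 2 * l + 1 + 2 by ring] at a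
    rw [show 2 * (k + 1) = 2 * k + 2 by ring, show 2 * (l + 1) = 2 * l + 1 + 1 by ring] at b
    rw [show 2 * (l + 1) = 2 * l + 1 + 1 by ring] at c
    rw [a, b, c, famProd_odd]
    have r1 := famE_rel hn k
    have r2 := famO_rel hn l
    rw [show 2 * l + 1 + 2 = 2 * l + 3 by ring]
    linear_combination halfS * famO n k * r2 - famE n (l + 1) * r1
  · have a := famProd_even (n := n) (k + 1) (l + 1)
    have b := famProd_even (n := n) (k + 1) l
    have c := famProd_odd (n := n) (k + 1) l
    rw [show 2 * (k + 1) = 2 * k + 1 + 1 by ring, show 2 * (l + 1) = 2 * l + 2 by ring] at a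
    rw [show 2 * (k + 1) = 2 * k + 1 + 1 by ring] at b
    rw [show 2 * (k + 1) + 1 = 2 * k + 1 + 2 by ring] at c
    rw [a, b, c, famProd_odd]
    have r1 := famE_rel hn l
    have r2 := famO_rel hn k
    rw [show 2 * k + 1 + 2 = 2 * k + 3 by ring]
    linear_combination famE n (k + 1) * r1 - halfS * famO n l * r2
  · rw [show 2 * k + 1 + 1 = 2 * (k + 1) by ring, show 2 * l + 1 + 2 = 2 * (l + 1) + 1 by ring,
      show 2 * k + 1 + 2 = 2 * (k + 1) + 1 by ring, show 2 * l + 1 + 1 = 2 * (l + 1) by ring,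
      famProd_even_odd, famProd_even_odd, famProd_odd_even, famProd_odd_even]
    simp

/-- Linearization: a functional that is non-negative on all `E k` is non-negative on all products
`p_i p_j` with `i + j` even. -/
lemma famProd_nonneg (hn : 2 ≤ n) (φ : ℝ[X] →ₗ[ℝ] ℝ) (hφ : ∀ k, 0 ≤ φ (famE n k)) (i j : ℕ) :
    0 ≤ φ (famProd n i j) := by
  refine wave_nonneg (α := geg n) (u := fun i j => φ (famProd n i j)) geg_zero (geg_pos hn)
    (geg_le_half hn) (geg_mono hn) (fun i => ?_) (fun i j => ?_) (fun i => ?_)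
    (fun i j => by rw [famProd_symm]) i j
  · have := congrArg φ (famProd_H0 hn i)
    simpa only [map_add, OrthFam.map_mul_C] using this
  · have := congrArg φ (famProd_H1 hn i j)
    simpa only [map_add, OrthFam.map_mul_C] using this
  · rcases Nat.even_or_odd' i with ⟨k, rfl | rfl⟩
    · have := famProd_even (n := n) k 0
      rw [mul_zero, famE_zero, mul_one] at this
      simpa only [this] using hφ k
    · have := famProd_odd_even (n := n) k 0
      rw [mul_zero] at this
      simp [this]

end family

/-! ### The weights `v_{a,b}` -/

lemma integrableOn_rpow_mul {p q : ℝ} (hp : -1 < p) (hq : -1 < q) :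
    IntegrableOn (fun t : ℝ => (1 + t) ^ p * (1 - t) ^ q) (Set.Ioo (-1) 1) := by
  have h1 : IntervalIntegrable (fun t : ℝ => (1 + t) ^ p * (1 - t) ^ q) volume (-1) 0 := by
    have := (intervalIntegral.intervalIntegrable_rpow' (a := 0) (b := 1) hp).comp_add_left 1
    norm_num at this
    refine this.mul_continuousOn fun t ht => ?_
    rw [Set.uIcc_of_le (by norm_num)] at ht
    exact ((continuousAt_const.sub continuousAt_id).rpow_const
      (Or.inl (by simp; linarith [ht.2]))).continuousWithinAt
  have h2 : IntervalIntegrable (fun t : ℝ => (1 + t) ^ p * (1 - t) ^ q) volume 0 1 := by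
    have := (intervalIntegral.intervalIntegrable_rpow' (a := 1) (b := 0) hq).comp_sub_left 1
    norm_num at this
    refine this.continuousOn_mul fun t ht => ?_
    rw [Set.uIcc_of_le (by norm_num)] at ht
    exact ((continuousAt_const.add continuousAt_id).rpow_const
      (Or.inl (by simp; linarith [ht.1]))).continuousWithinAt
  have h3 := h1.trans h2
  rw [intervalIntegrable_iff_integrableOn_Ioo_of_le (by norm_num)] at h3
  exact h3

lemma integrableOn_vw {n : ℕ} (hn : 2 ≤ n) (a b : ℕ) (f : ℝ[X]) :
    IntegrableOn (fun t => f.eval t * vw n a b t) (Set.Ioo (-1) 1) := by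
  have hn' : (2 : ℝ) ≤ n := by exact_mod_cast hn
  have ha : (0 : ℝ) ≤ a := Nat.cast_nonneg a
  have hb : (0 : ℝ) ≤ b := Nat.cast_nonneg b
  have h := integrableOn_rpow_mul (p := (b : ℝ) - 1 / 2) (q := (a : ℝ) + ((n : ℝ) - 3) / 2)
    (by linarith) (by linarith)
  have h3 : IntervalIntegrable (fun t => vw n a b t) volume (-1) 1 := by
    rw [intervalIntegrable_iff_integrableOn_Ioo_of_le (by norm_num)]
    exact h
  have h4 : IntervalIntegrable (fun t => f.eval t * vw n a b t) volume (-1) 1 :=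
    h3.continuousOn_mul f.continuous.continuousOn
  rwa [intervalIntegrable_iff_integrableOn_Ioo_of_le (by norm_num)] at h4

/-- The functional `f ↦ ∫ f v_{a,b}` on polynomials. -/
def wInt {n : ℕ} (hn : 2 ≤ n) (a b : ℕ) : ℝ[X] →ₗ[ℝ] ℝ where
  toFun f := ∫ t in Set.Ioo (-1 : ℝ) 1, f.eval t * vw n a b t
  map_add' f g := by
    rw [← integral_add (integrableOn_vw hn a b f) (integrableOn_vw hn a b g)]
    simp [add_mul]
  map_smul' c f := by
    simp only [eval_smul, smul_eq_mul, mul_assoc, RingHom.id_apply]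
    exact integral_const_mul _ _

lemma wInt_apply {n : ℕ} (hn : 2 ≤ n) (a b : ℕ) (f : ℝ[X]) :
    wInt hn a b f = ∫ t in Set.Ioo (-1 : ℝ) 1, f.eval t * vw n a b t := rfl

lemma vw_pos {n a b : ℕ} {t : ℝ} (ht : t ∈ Set.Ioo (-1 : ℝ) 1) : 0 < vw n a b t :=
  mul_pos (Real.rpow_pos_of_pos (by linarith [ht.1]) _)
    (Real.rpow_pos_of_pos (by linarith [ht.2]) _)

lemma wInt_pd {n : ℕ} (hn : 2 ≤ n) (a b : ℕ) (q : ℝ[X]) (hq : q ≠ 0) :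
    0 < wInt hn a b (q * q) := by
  rw [wInt_apply, setIntegral_pos_iff_support_of_nonneg_ae _ (integrableOn_vw hn a b _)]
  · have hsub : Set.Ioo (-1 : ℝ) 1 \ (q.roots.toFinset : Set ℝ) ⊆
        Function.support (fun t => (q * q).eval t * vw n a b t) ∩ Set.Ioo (-1) 1 := by
      intro t ht
      refine ⟨?_, ht.1⟩
      have h1 : q.eval t ≠ 0 := by
        intro h0
        exact ht.2 (by simp [hq, h0])
      rw [Function.mem_support, eval_mul]
      exact mul_ne_zero (mul_self_ne_zero.mpr h1) (vw_pos ht.1).ne'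
    refine lt_of_lt_of_le ?_ (measure_mono hsub)
    rw [measure_sdiff_null (Finset.measure_zero _ _), Real.volume_Ioo]
    norm_num
  · filter_upwards [ae_restrict_mem measurableSet_Ioo] with t ht
    rw [eval_mul]
    exact mul_nonneg (mul_self_nonneg _) (vw_pos ht).le

lemma wInt_one_left {n : ℕ} (hn : 2 ≤ n) (b : ℕ) (f : ℝ[X]) :
    wInt hn 1 b f = wInt hn 0 b ((C 1 - X) * f) := by
  rw [wInt_apply, wInt_apply]
  refine setIntegral_congr_fun measurableSet_Ioo fun t ht => ?_
  have : (0 : ℝ) < 1 - t := by linarith [ht.2]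
  simp only [vw, eval_mul, eval_sub, eval_C, eval_X]
  push_cast
  rw [add_comm (1 : ℝ) (((n : ℝ) - 3) / 2), Real.rpow_add_one this.ne', zero_add]
  ring

lemma wInt_one_right {n : ℕ} (hn : 2 ≤ n) (f : ℝ[X]) :
    wInt hn 0 1 f = wInt hn 0 0 ((1 + X) * f) := by
  rw [wInt_apply, wInt_apply]
  refine setIntegral_congr_fun measurableSet_Ioo fun t ht => ?_
  have : (0 : ℝ) < 1 + t := by linarith [ht.1]
  simp only [vw, eval_mul, eval_add, eval_one, eval_X]
  push_cast
  rw [show (1 : ℝ) - 1 / 2 = (0 - 1 / 2) + 1 by ring, Real.rpow_add_one this.ne']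
  ring

/-- The Beta integral recurrence, by integrating the derivative of
`(1 + t)^(r + 1/2) (1 - t)^((n - 1)/2)`, which vanishes at both ends. -/
lemma wInt_moment {n : ℕ} (hn : 2 ≤ n) (r : ℕ) :
    wInt hn 0 0 (halfS ^ (r + 1)) * (2 * r + n) = wInt hn 0 0 (halfS ^ r) * (2 * r + 1) := by
  have hn' : (2 : ℝ) ≤ n := by exact_mod_cast hn
  have hr : (0 : ℝ) ≤ r := Nat.cast_nonneg r
  set g : ℝ[X] := C (2 * (r : ℝ) + 1) * halfS ^ r - C (2 * (r : ℝ) + n) * halfS ^ (r + 1) with hg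
  suffices h : wInt hn 0 0 g = 0 by
    rw [hg, map_sub, OrthFam.map_mul_C, OrthFam.map_mul_C] at h
    linarith
  set F : ℝ → ℝ := fun t => (1 + t) ^ ((r : ℝ) + 1 / 2) * (1 - t) ^ (((n : ℝ) - 1) / 2) with hF
  have hc : ContinuousOn F (Set.Icc (-1) 1) := by
    apply Continuous.continuousOn
    exact ((continuous_const.add continuous_id).rpow_const fun _ => Or.inr (by positivity)).mul
      ((continuous_const.sub continuous_id).rpow_const fun _ => Or.inr (by linarith))
  have hd : ∀ t ∈ Set.Ioo (-1 : ℝ) 1,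
      HasDerivAt F (2 ^ r * (g.eval t * vw n 0 0 t)) t := by
    intro t ht
    have h1 : (0 : ℝ) < 1 + t := by linarith [ht.1]
    have h2 : (0 : ℝ) < 1 - t := by linarith [ht.2]
    have d1 := ((hasDerivAt_id t).const_add 1).rpow_const (p := (r : ℝ) + 1 / 2) (Or.inl h1.ne')
    have d2 := ((hasDerivAt_id t).const_sub 1).rpow_const (p := ((n : ℝ) - 1) / 2)
      (Or.inl h2.ne')
    refine (d1.mul d2).congr_deriv ?_
    simp only [id, hg, vw, halfS, eval_sub, eval_mul, eval_C, eval_pow, eval_add, eval_one,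
      eval_X]
    have e1 : (1 + t) ^ ((r : ℝ) + 1 / 2 - 1) = (1 + t) ^ r * (1 + t) ^ (-(1 / 2) : ℝ) := by
      rw [← Real.rpow_natCast, ← Real.rpow_add h1]; congr 1; ring
    have e2 : (1 + t) ^ ((r : ℝ) + 1 / 2) =
        (1 + t) ^ r * (1 + t) * (1 + t) ^ (-(1 / 2) : ℝ) := by
      rw [mul_right_comm, ← e1, ← Real.rpow_add_one h1.ne']; congr 1; ring
    have e3 : (1 - t) ^ (((n : ℝ) - 1) / 2) = (1 - t) ^ (((n : ℝ) - 3) / 2) * (1 - t) := by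
      rw [← Real.rpow_add_one h2.ne']; congr 1; ring
    have e4 : (1 - t) ^ (((n : ℝ) - 1) / 2 - 1) = (1 - t) ^ (((n : ℝ) - 3) / 2) := by
      congr 1; ring
    have e5 : (2 : ℝ) ^ r * (1 / 2 * (1 + t)) ^ r = (1 + t) ^ r := by
      rw [← mul_pow]; congr 1; ring
    rw [e1, e2, e3, e4]
    push_cast
    rw [zero_sub, zero_add, pow_succ (1 / 2 * (1 + t))]
    rw [← e5]
    ring
  have hdint : IntervalIntegrable (fun t => 2 ^ r * (g.eval t * vw n 0 0 t)) volume (-1) 1 := by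
    rw [intervalIntegrable_iff_integrableOn_Ioo_of_le (by norm_num)]
    exact (integrableOn_vw hn 0 0 g).const_mul _
  have h := intervalIntegral.integral_eq_sub_of_hasDerivAt_of_le (by norm_num) hc hd hdint
  have hF1 : F 1 = 0 := by
    simp only [hF, sub_self]; rw [Real.zero_rpow (by linarith), mul_zero]
  have hF0 : F (-1) = 0 := by
    simp only [hF, add_neg_cancel]; rw [Real.zero_rpow (by positivity), zero_mul]
  rw [hF1, hF0, sub_zero, intervalIntegral.integral_of_le (by norm_num),
    integral_Ioc_eq_integral_Ioo, integral_const_mul] at h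
  exact (mul_eq_zero.mp h).resolve_left (by positivity)

lemma IsMonicOrth.orthFam {n a b : ℕ} (hn : 2 ≤ n) {P : ℕ → ℝ[X]} (h : IsMonicOrth n a b P)
    (N : ℕ) : OrthFam (wInt hn a b) N P := by
  refine ⟨fun q hq _ => wInt_pd hn a b q hq, fun k _ => (h k).2.1.le, fun k _ => ?_,
    fun k _ q hq => ?_⟩
  · have := (h k).1.coeff_natDegree
    rw [(h k).2.1] at this
    rw [this]; exact one_pos
  · rw [wInt_apply]
    simpa only [eval_mul] using (h k).2.2 q hq

/-! ### Assembling the expansions -/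

/-- The explicit orthogonal family for the weight `v_{0,b}`. -/
def famB (n b : ℕ) : ℕ → ℝ[X] := if b = 0 then famE n else famO n

lemma famB_orth {n b : ℕ} (hn : 2 ≤ n) (hb : b ≤ 1) (N : ℕ) :
    OrthFam (wInt hn 0 b) N (famB n b) := by
  interval_cases b
  · simpa [famB] using famE_orth hn (wInt_pd hn 0 0) (wInt_moment hn) N
  · simpa [famB] using famO_orth hn (wInt_pd hn 0 1) (wInt_one_right hn) (wInt_moment hn) N

/-- `f` has non-negative coefficients in the orthogonal family of `v_{0,b}`. -/
def Coneb {n : ℕ} (hn : 2 ≤ n) (b : ℕ) (f : ℝ[X]) : Prop :=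
  ∀ i, 0 ≤ wInt hn 0 b (f * famB n b i)

lemma coneb_one {n b : ℕ} (hn : 2 ≤ n) (hb : b ≤ 1) : Coneb hn b 1 := by
  intro i
  have h := famB_orth hn hb i
  rw [mul_comm, h.pair_top le_rfl (by simp)]
  refine mul_nonneg ?_ (div_pos (h.norm_pos le_rfl) (h.lc i le_rfl)).le
  rw [coeff_one]
  split_ifs <;> norm_num

/-- The product `(1 + t)^b f g` has non-negative coefficients in the orthogonal family of `v_{0,0}`
when `f` and `g` have non-negative coefficients in that of `v_{0,b}`. -/
lemma coneb_mul {n b : ℕ} (hn : 2 ≤ n) (hb : b ≤ 1) {P0 : ℕ → ℝ[X]}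
    (hP0 : IsMonicOrth n 0 0 P0) {f g : ℝ[X]} (hf : Coneb hn b f) (hg : Coneb hn b g) (m : ℕ) :
    0 ≤ wInt hn 0 0 ((1 + X) ^ b * (f * g) * P0 m) := by
  -- `E k` is a positive multiple of `P0 k`
  have hEP : ∀ k, 0 ≤ wInt hn 0 0 (famE n k * P0 m) := by
    intro k
    have hE := famE_orth hn (wInt_pd hn 0 0) (wInt_moment hn) k
    have hP := hP0.orthFam hn m
    rcases lt_trichotomy k m with h | rfl | h
    · rw [mul_comm, hP.orth m le_rfl _ ((hE.deg k le_rfl).trans_lt h)]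
    · rw [hE.pair_top le_rfl (hP.deg k le_rfl)]
      exact mul_nonneg (hP.lc k le_rfl).le (div_pos (hE.norm_pos le_rfl) (hE.lc k le_rfl)).le
    · rw [hE.orth k le_rfl _ ((hP.deg m le_rfl).trans_lt h)]
  have hprod : ∀ i j, 0 ≤ wInt hn 0 0 ((1 + X) ^ b * (famB n b i * famB n b j) * P0 m) := by
    intro i j
    have key := famProd_nonneg hn (wInt hn 0 0 ∘ₗ LinearMap.mulRight ℝ (P0 m)) hEP
    simp only [LinearMap.comp_apply, LinearMap.mulRight_apply] at key
    interval_cases b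
    · have := key (2 * i) (2 * j)
      rw [famProd_even] at this
      simpa [famB] using this
    · have := key (2 * i + 1) (2 * j + 1)
      rw [famProd_odd] at this
      have h3 : (1 + X : ℝ[X]) = C 2 * halfS := by
        rw [halfS, ← mul_assoc, ← C_mul]; norm_num
      simp only [famB, one_ne_zero, if_false, pow_one]
      rw [h3, mul_assoc, mul_assoc, OrthFam.map_mul_C, ← mul_assoc]
      exact mul_nonneg zero_le_two this
  have hstep : ∀ i, 0 ≤ wInt hn 0 0 ((1 + X) ^ b * (famB n b i * g) * P0 m) := by
    intro i
    have := (famB_orth hn hb g.natDegree).nonneg_of_pair le_rfl (fun i _ => hg i)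
      (wInt hn 0 0 ∘ₗ LinearMap.mulLeft ℝ ((1 + X) ^ b * famB n b i * P0 m)) fun j _ => by
        simp only [LinearMap.comp_apply, LinearMap.mulLeft_apply]
        convert hprod i j using 2
        ring
    simp only [LinearMap.comp_apply, LinearMap.mulLeft_apply] at this
    convert this using 2
    ring
  have := (famB_orth hn hb f.natDegree).nonneg_of_pair le_rfl (fun i _ => hf i)
    (wInt hn 0 0 ∘ₗ LinearMap.mulLeft ℝ ((1 + X) ^ b * g * P0 m)) fun j _ => by
      simp only [LinearMap.comp_apply, LinearMap.mulLeft_apply]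
      convert hstep j using 2
      ring
  simp only [LinearMap.comp_apply, LinearMap.mulLeft_apply] at this
  convert this using 2
  ring

lemma exists_expansion {n : ℕ} (hn : 2 ≤ n) {P0 : ℕ → ℝ[X]} (hP0 : IsMonicOrth n 0 0 P0)
    {f : ℝ[X]} {N : ℕ} (hd : f.natDegree < N) (hf : ∀ m, 0 ≤ wInt hn 0 0 (f * P0 m)) :
    ∃ c : ℕ → ℝ, (∀ j, 0 ≤ c j) ∧ f = ∑ j ∈ Finset.range N, C (c j) * P0 j := by
  obtain ⟨M, rfl⟩ : ∃ M, N = M + 1 := ⟨N - 1, by omega⟩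
  refine ⟨_, fun j => ?_, (hP0.orthFam hn M).expand (by omega)⟩
  exact div_nonneg (hf j) ((hP0.orthFam hn j).norm_pos le_rfl).le

/-- If `Π_L(t) = ∏_{i=1}^{L} (t-βᵢ)`, with `-1 < β_L < … < β₁ < 1`, is orthogonal to all
polynomials of degree `≤ L-2` with weight `v_{1,b}`, then the polynomials `(1+t)^b`,
`(1+t)^b ∏_{i=k}^{L}(t-βᵢ)` and `(1+t)^b ∏_{i=2}^{L}(t-βᵢ) ∏_{i=k}^{L}(t-βᵢ)` for
`2 ≤ k ≤ L` all have non-negative coefficients in their expansions in the family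
`P_j = P_j^{0,0}`. -/
theorem stmt_14 (n L b : ℕ) (hn : 2 ≤ n) (hL : 2 ≤ L) (hb : b ≤ 1)
    (β : ℕ → ℝ)
    (hβr : ∀ i ∈ Finset.Icc 1 L, β i ∈ Set.Ioo (-1 : ℝ) 1)
    (hβmono : ∀ i ∈ Finset.Icc 1 L, ∀ j ∈ Finset.Icc 1 L, i < j → β j < β i)
    (P1 P0 : ℕ → Polynomial ℝ)
    (hP1 : IsMonicOrth n 1 b P1) (hP0 : IsMonicOrth n 0 0 P0)
    (horth : ∀ q : Polynomial ℝ, q.natDegree ≤ L - 2 →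
      ∫ t in Set.Ioo (-1 : ℝ) 1,
        (∏ i ∈ Finset.Icc 1 L, (Polynomial.X - Polynomial.C (β i))).eval t * q.eval t *
          vw n 1 b t = 0) :
    (∃ c : ℕ → ℝ, (∀ j, 0 ≤ c j) ∧
      (1 + Polynomial.X) ^ b =
        ∑ j ∈ Finset.range (b + 1), Polynomial.C (c j) * P0 j) ∧
    ∀ k ∈ Finset.Icc 2 L,
      (∃ c : ℕ → ℝ, (∀ j, 0 ≤ c j) ∧
        (1 + Polynomial.X) ^ b * ∏ i ∈ Finset.Icc k L, (Polynomial.X - Polynomial.C (β i)) =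
          ∑ j ∈ Finset.range (L - k + b + 2), Polynomial.C (c j) * P0 j) ∧
      (∃ d : ℕ → ℝ, (∀ j, 0 ≤ d j) ∧
        (1 + Polynomial.X) ^ b * ((∏ i ∈ Finset.Icc 2 L, (Polynomial.X - Polynomial.C (β i))) *
            ∏ i ∈ Finset.Icc k L, (Polynomial.X - Polynomial.C (β i))) =
          ∑ j ∈ Finset.range (2 * L - k + b + 1), Polynomial.C (d j) * P0 j) := by
  have hO1 := hP1.orthFam hn (L - 1)
  -- the partial products have non-negative coefficients for `v_{1,b}`, hence for `v_{0,b}`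
  have hcone : ∀ k ∈ Finset.Icc 2 L, Coneb hn b (∏ i ∈ Finset.Icc k L, (X - C (β i))) := by
    intro k hk m
    have hprod := prod_nonneg_of_orth hL hO1 hβmono (wInt_pd hn 1 b) (fun q hq => by
      rw [wInt_apply]; simpa only [eval_mul] using horth q hq) k hk
    have hdeg : (∏ i ∈ Finset.Icc k L, (X - C (β i))).natDegree ≤ L - 1 := by
      simp only [Finset.mem_Icc] at hk
      rw [natDegree_finsetProd_X_sub_C_eq_card, Nat.card_Icc]
      omega
    refine hO1.nonneg_of_pair hdeg hprod (wInt hn 0 b ∘ₗ LinearMap.mulRight ℝ (famB n b m))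
      fun j hj => ?_
    exact (famB_orth hn hb (L - 1 + m)).christoffel hO1 (wInt_one_left hn b) (by omega) (by omega)
      hj
  have hXd : ((1 + X : ℝ[X]) ^ b).natDegree ≤ b := by
    refine natDegree_pow_le.trans ?_
    have : (1 + X : ℝ[X]).natDegree ≤ 1 := (natDegree_add_le _ _).trans (by simp)
    nlinarith
  have hpd : ∀ k, (∏ i ∈ Finset.Icc k L, (X - C (β i))).natDegree = L + 1 - k := fun k => by
    rw [natDegree_finsetProd_X_sub_C_eq_card, Nat.card_Icc]
  refine ⟨exists_expansion hn hP0 (by omega) fun m => ?_, fun k hk => ⟨?_, ?_⟩⟩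
  · have := coneb_mul hn hb hP0 (coneb_one hn hb) (coneb_one hn hb) m
    rwa [mul_one, mul_one] at this
  · refine exists_expansion hn hP0 ?_ fun m => ?_
    · refine natDegree_mul_le.trans_lt ?_
      rw [hpd]
      omega
    · have := coneb_mul hn hb hP0 (hcone k hk) (coneb_one hn hb) m
      rwa [mul_one] at this
  · refine exists_expansion hn hP0 ?_ fun m =>
      coneb_mul hn hb hP0 (hcone 2 (by simp; omega)) (hcone k hk) m
    have h1 : ((∏ i ∈ Finset.Icc 2 L, (X - C (β i))) *
        ∏ i ∈ Finset.Icc k L, (X - C (β i))).natDegree ≤ (L + 1 - 2) + (L + 1 - k) := by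
      refine natDegree_mul_le.trans ?_
      rw [hpd, hpd]
    simp only [Finset.mem_Icc] at hk
    refine natDegree_mul_le.trans_lt ?_
    omega
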